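/- arXiv:2502.00958 — 11 statements merged into one kernel-verified Lean document; each statement's English description precedes it below -/
import Mathlib

section
/- Let n ≥ 2, let μ ∈ Δ_n have full support, let σ : [0,∞) → ℝ be strictly concave and differentiable with σ(1) = 0, let E be a nonempty proper subset of {1,…,n}, and let α ∈ [0,1]. Then the unique minimizer of the Bayesian divergence d_μ(π) = −Σ_{i=1}^n μ_i σ(π_i/μ_i) over the set {π ∈ Δ_n : π(E) = α} is the vector π* given by π*_i = α·μ_i/μ(E) for i ∈ E and π*_i = (1−α)·μ_i/μ(E^c) for i ∉ E. -/
open Finset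

lemma jensen_aux {n : ℕ} (μ : Fin n → ℝ) (hμpos : ∀ i, 0 < μ i)
    (σ : ℝ → ℝ) (hσ : StrictConcaveOn ℝ (Set.Ici (0 : ℝ)) σ)
    (S : Finset (Fin n)) (hS : S.Nonempty) (p : Fin n → ℝ) (hp : ∀ i, 0 ≤ p i) (a : ℝ)
    (ha : ∑ i ∈ S, p i = a) :
    ∑ i ∈ S, μ i * σ (p i / μ i) ≤ (∑ j ∈ S, μ j) * σ (a / ∑ j ∈ S, μ j) ∧
    ((∃ i ∈ S, p i ≠ a * μ i / ∑ j ∈ S, μ j) →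
      ∑ i ∈ S, μ i * σ (p i / μ i) < (∑ j ∈ S, μ j) * σ (a / ∑ j ∈ S, μ j)) := by
  have hM : 0 < ∑ j ∈ S, μ j := Finset.sum_pos (fun i _ => hμpos i) hS
  set M := ∑ j ∈ S, μ j with hMdef
  have h0 : ∀ i ∈ S, 0 < μ i / M := fun i _ => div_pos (hμpos i) hM
  have h1 : ∑ i ∈ S, μ i / M = 1 := by
    rw [← Finset.sum_div, ← hMdef, div_self hM.ne']
  have hmem : ∀ i ∈ S, p i / μ i ∈ Set.Ici (0 : ℝ) :=
    fun i _ => div_nonneg (hp i) (hμpos i).le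
  have e1 : ∑ i ∈ S, (μ i / M) • (p i / μ i) = a / M := by
    rw [← ha, Finset.sum_div]
    refine Finset.sum_congr rfl fun i _ => ?_
    have := (hμpos i).ne'
    simp only [smul_eq_mul]
    field_simp
  have e2 : ∑ i ∈ S, μ i * σ (p i / μ i) = M * ∑ i ∈ S, (μ i / M) • σ (p i / μ i) := by
    rw [Finset.mul_sum]
    refine Finset.sum_congr rfl fun i _ => ?_
    simp only [smul_eq_mul]
    field_simp
  have hle := hσ.concaveOn.le_map_sum (fun i hi => (h0 i hi).le) h1 hmem
  rw [e1] at hle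
  refine ⟨by rw [e2]; exact mul_le_mul_of_nonneg_left hle hM.le, ?_⟩
  rintro ⟨i, hi, hne⟩
  rw [e2]
  refine mul_lt_mul_of_pos_left (lt_of_le_of_ne hle fun heq => hne ?_) hM
  have := (hσ.map_sum_eq_iff h0 h1 hmem).1 (by rw [e1]; exact heq.symm) i hi
  rw [e1, div_eq_div_iff (hμpos i).ne' hM.ne'] at this
  rw [eq_div_iff hM.ne', this]

/-- For a full-support prior `μ` on a simplex `Δ_n` and a Bayesian divergence
`d_μ(π) = −Σ μ_i σ(π_i/μ_i)`, the unique minimizer over the α-event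
`{π ∈ Δ_n : π(E) = α}` is the proportional (extended Bayesian) posterior. -/
theorem stmt0 (n : ℕ) (hn : 2 ≤ n) (μ : Fin n → ℝ)
    (hμpos : ∀ i, 0 < μ i) (hμsum : ∑ i, μ i = 1)
    (σ : ℝ → ℝ) (hσconc : StrictConcaveOn ℝ (Set.Ici (0 : ℝ)) σ)
    (hσdiff : DifferentiableOn ℝ σ (Set.Ici (0 : ℝ))) (hσ1 : σ 1 = 0)
    (E : Finset (Fin n)) (hE : E.Nonempty) (hEne : E ≠ Finset.univ)
    (α : ℝ) (hα : α ∈ Set.Icc (0 : ℝ) 1)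
    (d : (Fin n → ℝ) → ℝ) (hd : ∀ π, d π = -∑ i, μ i * σ (π i / μ i))
    (C : Set (Fin n → ℝ))
    (hC : C = {π | (∀ i, 0 ≤ π i) ∧ (∑ i, π i = 1) ∧ ∑ i ∈ E, π i = α})
    (πstar : Fin n → ℝ)
    (hπstar : ∀ i, πstar i = if i ∈ E then α * μ i / (∑ j ∈ E, μ j)
      else (1 - α) * μ i / (∑ j ∈ Eᶜ, μ j)) :
    πstar ∈ C ∧ ∀ π ∈ C, π ≠ πstar → d πstar < d π := by
  have hEc : (Eᶜ).Nonempty := by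
    rw [Finset.nonempty_iff_ne_empty]
    simpa using hEne
  have hM : 0 < ∑ j ∈ E, μ j := Finset.sum_pos (fun i _ => hμpos i) hE
  have hN : 0 < ∑ j ∈ Eᶜ, μ j := Finset.sum_pos (fun i _ => hμpos i) hEc
  have hsE : ∀ i ∈ E, πstar i = α * μ i / (∑ j ∈ E, μ j) := fun i hi => by
    rw [hπstar, if_pos hi]
  have hsEc : ∀ i ∈ Eᶜ, πstar i = (1 - α) * μ i / (∑ j ∈ Eᶜ, μ j) := fun i hi => by
    rw [hπstar, if_neg (Finset.mem_compl.1 hi)]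
  have sE : ∑ i ∈ E, πstar i = α := by
    rw [Finset.sum_congr rfl hsE, ← Finset.sum_div, ← Finset.mul_sum, mul_div_cancel_right₀ _ hM.ne']
  have sEc : ∑ i ∈ Eᶜ, πstar i = 1 - α := by
    rw [Finset.sum_congr rfl hsEc, ← Finset.sum_div, ← Finset.mul_sum, mul_div_cancel_right₀ _ hN.ne']
  have dE : ∑ i ∈ E, μ i * σ (πstar i / μ i) = (∑ j ∈ E, μ j) * σ (α / ∑ j ∈ E, μ j) := by
    rw [Finset.sum_mul]
    refine Finset.sum_congr rfl fun i hi => ?_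
    rw [hsE i hi, div_right_comm, mul_div_cancel_right₀ _ (hμpos i).ne']
  have dEc : ∑ i ∈ Eᶜ, μ i * σ (πstar i / μ i)
      = (∑ j ∈ Eᶜ, μ j) * σ ((1 - α) / ∑ j ∈ Eᶜ, μ j) := by
    rw [Finset.sum_mul]
    refine Finset.sum_congr rfl fun i hi => ?_
    rw [hsEc i hi, div_right_comm, mul_div_cancel_right₀ _ (hμpos i).ne']
  subst hC
  constructor
  · refine ⟨fun i => ?_, ?_, sE⟩
    · rw [hπstar]
      split_ifs
      · exact div_nonneg (mul_nonneg hα.1 (hμpos i).le) hM.le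
      · exact div_nonneg (mul_nonneg (sub_nonneg.2 hα.2) (hμpos i).le) hN.le
    · rw [← Finset.sum_add_sum_compl E, sE, sEc]; ring
  · rintro p ⟨hp0, hp1, hpE⟩ hne
    have hpEc : ∑ i ∈ Eᶜ, p i = 1 - α := by
      rw [← Finset.sum_add_sum_compl E, hpE] at hp1
      linarith
    obtain ⟨a1, a2⟩ := jensen_aux μ hμpos σ hσconc E hE p hp0 α hpE
    obtain ⟨b1, b2⟩ := jensen_aux μ hμpos σ hσconc Eᶜ hEc p hp0 (1 - α) hpEc
    obtain ⟨i, hi⟩ := Function.ne_iff.1 hne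
    rw [hd, hd, ← Finset.sum_add_sum_compl E, ← Finset.sum_add_sum_compl E, dE, dEc]
    by_cases hiE : i ∈ E
    · have := a2 ⟨i, hiE, by rw [← hsE i hiE]; exact hi⟩
      linarith
    · have hiE := Finset.mem_compl.2 hiE
      have := b2 ⟨i, hiE, by rw [← hsEc i hiE]; exact hi⟩
      linarith
end

section
/- Let n ≥ 3, let μ ∈ Δ_n have full support, let σ : [0,∞) → ℝ be strictly concave and differentiable with σ(1) = 0, let E₁ and E₂ be disjoint nonempty subsets of {1,…,n} with E₁ ∪ E₂ ≠ {1,…,n}, and let α₁, α₂ ∈ (0,1) with α₁ + α₂ < 1. Then the unique minimizer of the Bayesian divergence d_μ(π) = −Σ_{i=1}^n μ_i σ(π_i/μ_i) over {π ∈ Δ_n : π(E₁) = α₁ and π(E₂) = α₂} is π* given by π*_i = α₁ μ_i/μ(E₁) for i ∈ E₁, π*_i = α₂ μ_i/μ(E₂) for i ∈ E₂, and π*_i = (1−α₁−α₂) μ_i/(1−μ(E₁∪E₂)) otherwise; moreover the minimum value equals −[μ(E₁)σ(α₁/μ(E₁)) + μ(E₂)σ(α₂/μ(E₂)) + (1−μ(E₁∪E₂))σ((1−α₁−α₂)/(1−μ(E₁∪E₂)))].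 -/
open Finset

lemma block_val {n : ℕ} (μ : Fin n → ℝ) (hμpos : ∀ i, 0 < μ i) (σ : ℝ → ℝ)
    (S : Finset (Fin n)) (a : ℝ) (p : Fin n → ℝ)
    (hp : ∀ i ∈ S, p i = a * μ i / ∑ j ∈ S, μ j) :
    ∑ i ∈ S, μ i * σ (p i / μ i) = (∑ j ∈ S, μ j) * σ (a / ∑ j ∈ S, μ j) := by
  rw [Finset.sum_mul]
  refine Finset.sum_congr rfl fun i hi => ?_
  have h : p i / μ i = a / ∑ j ∈ S, μ j := by
    rw [hp i hi, div_right_comm, mul_div_cancel_right₀ _ (hμpos i).ne']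
  rw [h]

lemma block_sum {n : ℕ} (μ : Fin n → ℝ) (hμpos : ∀ i, 0 < μ i)
    (S : Finset (Fin n)) (hS : S.Nonempty) (a : ℝ) (p : Fin n → ℝ)
    (hp : ∀ i ∈ S, p i = a * μ i / ∑ j ∈ S, μ j) :
    ∑ i ∈ S, p i = a := by
  have hM : 0 < ∑ j ∈ S, μ j := Finset.sum_pos (fun i _ => hμpos i) hS
  rw [Finset.sum_congr rfl hp, ← Finset.sum_div, ← Finset.mul_sum, mul_div_cancel_right₀ _ hM.ne']

lemma block_jensen {n : ℕ} (μ : Fin n → ℝ) (hμpos : ∀ i, 0 < μ i) (σ : ℝ → ℝ)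
    (hσconc : StrictConcaveOn ℝ (Set.Ici (0 : ℝ)) σ)
    (S : Finset (Fin n)) (hS : S.Nonempty) (a : ℝ) (p : Fin n → ℝ)
    (hp0 : ∀ i, 0 ≤ p i) (hp : ∑ i ∈ S, p i = a) :
    ∑ i ∈ S, μ i * σ (p i / μ i) ≤ (∑ j ∈ S, μ j) * σ (a / ∑ j ∈ S, μ j) ∧
    (∑ i ∈ S, μ i * σ (p i / μ i) = (∑ j ∈ S, μ j) * σ (a / ∑ j ∈ S, μ j) →
      ∀ i ∈ S, p i = a * μ i / ∑ j ∈ S, μ j) := by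
  have hM : 0 < ∑ j ∈ S, μ j := Finset.sum_pos (fun i _ => hμpos i) hS
  set M := ∑ j ∈ S, μ j with hMdef
  have hw : ∀ i ∈ S, 0 < μ i / M := fun i _ => div_pos (hμpos i) hM
  have hw1 : ∑ i ∈ S, μ i / M = 1 := by
    rw [← Finset.sum_div, ← hMdef, div_self hM.ne']
  have hmem : ∀ i ∈ S, p i / μ i ∈ Set.Ici (0 : ℝ) := fun i _ => div_nonneg (hp0 i) (hμpos i).le
  have hc : ∑ i ∈ S, (μ i / M) • (p i / μ i) = a / M := by
    rw [← hp, Finset.sum_div]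
    refine Finset.sum_congr rfl fun i _ => ?_
    have := (hμpos i).ne'
    simp only [smul_eq_mul]
    field_simp
  have hs : ∑ i ∈ S, (μ i / M) • σ (p i / μ i) = (∑ i ∈ S, μ i * σ (p i / μ i)) / M := by
    rw [Finset.sum_div]
    refine Finset.sum_congr rfl fun i _ => ?_
    simp only [smul_eq_mul]
    ring
  constructor
  · have := hσconc.concaveOn.le_map_sum (fun i hi => (hw i hi).le) hw1 hmem
    rw [hc, hs, div_le_iff₀ hM] at this
    linarith
  · intro heq i hi
    have := (hσconc.map_sum_eq_iff hw hw1 hmem).1 (by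
      rw [hc, hs, heq, mul_div_cancel_left₀ _ hM.ne']) i hi
    rw [hc, div_eq_iff (hμpos i).ne'] at this
    rw [this]; ring

/-- Unique minimizer of a Bayesian divergence over the intersection of two
α-events on disjoint events `E₁` and `E₂`, together with the minimum value. -/
theorem stmt1 (n : ℕ) (hn : 3 ≤ n) (μ : Fin n → ℝ)
    (hμpos : ∀ i, 0 < μ i) (hμsum : ∑ i, μ i = 1)
    (σ : ℝ → ℝ) (hσconc : StrictConcaveOn ℝ (Set.Ici (0 : ℝ)) σ)
    (hσdiff : DifferentiableOn ℝ σ (Set.Ici (0 : ℝ))) (hσ1 : σ 1 = 0)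
    (E₁ E₂ : Finset (Fin n)) (hE₁ : E₁.Nonempty) (hE₂ : E₂.Nonempty)
    (hdisj : Disjoint E₁ E₂) (hunion : E₁ ∪ E₂ ≠ Finset.univ)
    (α₁ α₂ : ℝ) (hα₁ : α₁ ∈ Set.Ioo (0 : ℝ) 1) (hα₂ : α₂ ∈ Set.Ioo (0 : ℝ) 1)
    (hαsum : α₁ + α₂ < 1)
    (d : (Fin n → ℝ) → ℝ) (hd : ∀ π, d π = -∑ i, μ i * σ (π i / μ i))
    (C : Set (Fin n → ℝ))
    (hC : C = {π | (∀ i, 0 ≤ π i) ∧ (∑ i, π i = 1) ∧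
      (∑ i ∈ E₁, π i = α₁) ∧ ∑ i ∈ E₂, π i = α₂})
    (πstar : Fin n → ℝ)
    (hπstar : ∀ i, πstar i =
      if i ∈ E₁ then α₁ * μ i / (∑ j ∈ E₁, μ j)
      else if i ∈ E₂ then α₂ * μ i / (∑ j ∈ E₂, μ j)
      else (1 - α₁ - α₂) * μ i / (1 - ∑ j ∈ E₁ ∪ E₂, μ j)) :
    (πstar ∈ C ∧ ∀ π ∈ C, π ≠ πstar → d πstar < d π) ∧
    d πstar = -((∑ j ∈ E₁, μ j) * σ (α₁ / ∑ j ∈ E₁, μ j) +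
      (∑ j ∈ E₂, μ j) * σ (α₂ / ∑ j ∈ E₂, μ j) +
      (1 - ∑ j ∈ E₁ ∪ E₂, μ j) * σ ((1 - α₁ - α₂) / (1 - ∑ j ∈ E₁ ∪ E₂, μ j))) := by
  set T := (E₁ ∪ E₂)ᶜ with hT
  have hTne : T.Nonempty := by
    rw [hT, Finset.nonempty_iff_ne_empty, Ne, Finset.compl_eq_empty_iff]
    exact hunion
  have split : ∀ f : Fin n → ℝ, ∑ i, f i = ∑ i ∈ E₁, f i + ∑ i ∈ E₂, f i + ∑ i ∈ T, f i := by
    intro f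
    rw [← Finset.sum_union hdisj, hT, Finset.sum_add_sum_compl]
  have hMT : 1 - ∑ j ∈ E₁ ∪ E₂, μ j = ∑ j ∈ T, μ j := by
    rw [Finset.sum_union hdisj]
    have := split μ
    linarith
  rw [hMT]
  simp only [hMT] at hπstar
  have s1 : ∀ i ∈ E₁, πstar i = α₁ * μ i / ∑ j ∈ E₁, μ j := fun i hi => by
    rw [hπstar, if_pos hi]
  have s2 : ∀ i ∈ E₂, πstar i = α₂ * μ i / ∑ j ∈ E₂, μ j := fun i hi => by
    rw [hπstar, if_neg (Finset.disjoint_right.1 hdisj hi), if_pos hi]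
  have s3 : ∀ i ∈ T, πstar i = (1 - α₁ - α₂) * μ i / ∑ j ∈ T, μ j := fun i hi => by
    have h : i ∉ E₁ ∧ i ∉ E₂ := by simpa [hT] using hi
    rw [hπstar, if_neg h.1, if_neg h.2]
  have hcov : ∀ i, i ∈ E₁ ∨ i ∈ E₂ ∨ i ∈ T := by
    intro i
    simp only [hT, Finset.mem_compl, Finset.mem_union]
    tauto
  have hval : d πstar = -((∑ j ∈ E₁, μ j) * σ (α₁ / ∑ j ∈ E₁, μ j) +
      (∑ j ∈ E₂, μ j) * σ (α₂ / ∑ j ∈ E₂, μ j) +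
      (∑ j ∈ T, μ j) * σ ((1 - α₁ - α₂) / ∑ j ∈ T, μ j)) := by
    rw [hd, split, block_val μ hμpos σ E₁ α₁ πstar s1, block_val μ hμpos σ E₂ α₂ πstar s2,
      block_val μ hμpos σ T _ πstar s3]
  have nn : ∀ (S : Finset (Fin n)) (a : ℝ) (i : Fin n), 0 ≤ a → 0 ≤ a * μ i / ∑ j ∈ S, μ j :=
    fun S a i ha => div_nonneg (mul_nonneg ha (hμpos i).le)
      (Finset.sum_nonneg fun j _ => (hμpos j).le)
  refine ⟨⟨?_, ?_⟩, hval⟩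
  · have t1 := block_sum μ hμpos E₁ hE₁ α₁ πstar s1
    have t2 := block_sum μ hμpos E₂ hE₂ α₂ πstar s2
    have t3 := block_sum μ hμpos T hTne _ πstar s3
    rw [hC]
    refine ⟨fun i => ?_, ?_, t1, t2⟩
    · rcases hcov i with h | h | h
      · rw [s1 i h]; exact nn _ _ _ hα₁.1.le
      · rw [s2 i h]; exact nn _ _ _ hα₂.1.le
      · rw [s3 i h]; exact nn _ _ _ (by linarith)
    · rw [split, t1, t2, t3]; ring
  · intro p hp hne
    rw [hC] at hp
    obtain ⟨p0, psum, p1, p2⟩ := hp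
    have p3 : ∑ i ∈ T, p i = 1 - α₁ - α₂ := by
      have := split p
      linarith
    obtain ⟨a1, b1⟩ := block_jensen μ hμpos σ hσconc E₁ hE₁ α₁ p p0 p1
    obtain ⟨a2, b2⟩ := block_jensen μ hμpos σ hσconc E₂ hE₂ α₂ p p0 p2
    obtain ⟨a3, b3⟩ := block_jensen μ hμpos σ hσconc T hTne _ p p0 p3
    by_contra hlt
    rw [not_lt, hval, hd, split] at hlt
    apply hne
    funext i
    rcases hcov i with h | h | h
    · rw [s1 i h]; exact b1 (by linarith) i h
    · rw [s2 i h]; exact b2 (by linarith) i h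
    · rw [s3 i h]; exact b3 (by linarith) i h
end

section
/- Let S be a finite set with |S| ≥ 2, let μ be a full-support probability distribution on S, let 𝓘 be a finite set, let ρ : 𝓘 → Δ(S) be an updating rule, and let e be an injective map assigning to each nonempty subset E of S an element e(E) ∈ 𝓘. Suppose ρ is minimally responsive: for every nonempty E ⊆ S, ρ(e(E))(s) ≥ μ(s) for all s ∈ E and ρ(e(E))(s) < μ(s) for all s ∉ E. Then ρ has a Bayesian representation: there exists P : S → Δ(𝓘) such that for every I ∈ 𝓘, Σ_{s'∈S} P(I|s')μ(s') > 0 and ρ(I)(s) = P(I|s)μ(s) / Σ_{s'∈S} P(I|s')μ(s') for every s ∈ S. -/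
open Finset

/-- any minimally responsive updating rule admits a Bayesian representation. -/
theorem stmt2 {S 𝓘 : Type*} [Fintype S] [Fintype 𝓘] [DecidableEq S]
    (hS : 2 ≤ Fintype.card S)
    (μ : S → ℝ) (hμpos : ∀ s, 0 < μ s) (hμsum : ∑ s, μ s = 1)
    (ρ : 𝓘 → S → ℝ)
    (hρ : ∀ I : 𝓘, (∀ s, 0 ≤ ρ I s) ∧ ∑ s, ρ I s = 1)
    (e : {E : Finset S // E.Nonempty} → 𝓘) (he : Function.Injective e)
    (hresp : ∀ E : {E : Finset S // E.Nonempty},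
      (∀ s ∈ E.1, μ s ≤ ρ (e E) s) ∧ (∀ s ∉ E.1, ρ (e E) s < μ s)) :
    ∃ P : S → 𝓘 → ℝ,
      (∀ s, (∀ I : 𝓘, 0 ≤ P s I) ∧ ∑ I : 𝓘, P s I = 1) ∧
      ∀ I : 𝓘, (0 < ∑ s' : S, P s' I * μ s') ∧
        ∀ s, ρ I s = P s I * μ s / ∑ s' : S, P s' I * μ s' := by
  classical
  have hne : Nonempty S := Fintype.card_pos_iff.mp (by omega)
  -- uniform margin
  obtain ⟨m, hm0, hm⟩ : ∃ m : ℝ, 0 < m ∧ ∀ E : {E : Finset S // E.Nonempty},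
      ∀ s, s ∉ E.1 → m ≤ μ s - ρ (e E) s := by
    have h : ∀ᶠ m : ℝ in nhdsWithin 0 (Set.Ioi 0), ∀ E : {E : Finset S // E.Nonempty},
        ∀ s, s ∉ E.1 → m ≤ μ s - ρ (e E) s := by
      rw [Filter.eventually_all]; intro E
      rw [Filter.eventually_all]; intro s
      by_cases hs : s ∈ E.1
      · simp [hs]
      · have := (hresp E).2 s hs
        have h2 : ∀ᶠ m : ℝ in nhdsWithin 0 (Set.Ioi 0), m < μ s - ρ (e E) s :=
          nhdsWithin_le_nhds (eventually_lt_nhds (by linarith))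
        filter_upwards [h2] with m hm _ using hm.le
    obtain ⟨m, h1, h2⟩ := (h.and self_mem_nhdsWithin).exists
    exact ⟨m, h2, h1⟩
  have hρ1 : ∀ I s, ρ I s ≤ 1 := fun I s => by
    rw [← (hρ I).2]
    exact Finset.single_le_sum (f := ρ I) (fun i _ => (hρ I).1 i) (Finset.mem_univ s)
  let L : (𝓘 → ℝ) →ₗ[ℝ] (S → ℝ) :=
    { toFun := fun w s => ∑ I, w I * (ρ I s - μ s)
      map_add' := by
        intro x y; ext s; simp [add_mul, Finset.sum_add_distrib]
      map_smul' := by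
        intro c x; ext s; simp [mul_assoc, Finset.mul_sum] }
  have hKc : IsClosed (L '' stdSimplex ℝ 𝓘) :=
    ((isCompact_stdSimplex ℝ 𝓘).image L.continuous_of_finiteDimensional).isClosed
  have hKx : Convex ℝ (L '' stdSimplex ℝ 𝓘) := (convex_stdSimplex ℝ 𝓘).linear_image L
  have key : ∀ J, ∃ c : 𝓘 → ℝ, (∀ I, 0 ≤ c I) ∧
      ∀ s, ∑ I, c I * (ρ I s - μ s) = -(m * (ρ J s - μ s)) := by
    intro J
    by_contra hcon
    have hnot : (fun s => -(m * (ρ J s - μ s))) ∉ L '' stdSimplex ℝ 𝓘 := by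
      rintro ⟨w, hw, hwe⟩
      exact hcon ⟨w, hw.1, fun s => congrFun hwe s⟩
    obtain ⟨f, u, hf1, hf2⟩ := geometric_hahn_banach_point_closed hKx hKc hnot
    let a : S → ℝ := fun s => f (Pi.single s 1)
    have hfa : ∀ x : S → ℝ, f x = ∑ s, x s * a s := by
      intro x
      conv_lhs => rw [pi_eq_sum_univ' x]
      rw [map_sum]
      refine Finset.sum_congr rfl fun s _ => ?_
      rw [map_smul, smul_eq_mul]
    obtain ⟨s0, hs0⟩ := Finite.exists_min a
    let E : {E : Finset S // E.Nonempty} :=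
      ⟨Finset.univ.filter (fun s => a s = a s0), ⟨s0, by simp⟩⟩
    have hv : f (fun s => ρ (e E) s - μ s) > u := by
      apply hf2
      refine ⟨Pi.single (e E) 1, single_mem_stdSimplex ℝ _, ?_⟩
      ext s
      simp [L, Pi.single_apply]
    have hz : ∀ I, ∑ s, (ρ I s - μ s) * a s = ∑ s, (ρ I s - μ s) * (a s - a s0) := by
      intro I
      have : ∑ s, (ρ I s - μ s) * a s0 = 0 := by
        rw [← Finset.sum_mul, Finset.sum_sub_distrib, (hρ I).2, hμsum]; simp
      simp only [mul_sub (ρ I _ - μ _), Finset.sum_sub_distrib, this, sub_zero]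
    have h1 : ∑ s, (ρ (e E) s - μ s) * (a s - a s0) ≤ ∑ s, -(m * (a s - a s0)) := by
      refine Finset.sum_le_sum fun s _ => ?_
      by_cases hs : a s = a s0
      · simp [hs]
      · have := hm E s (by simp [E, hs])
        have := hs0 s
        nlinarith
    have h2 : ∑ s, -(m * (a s - a s0)) ≤ -(m * ∑ s, (ρ J s - μ s) * (a s - a s0)) := by
      rw [Finset.mul_sum, ← Finset.sum_neg_distrib]
      refine Finset.sum_le_sum fun s _ => ?_
      have h3 := hs0 s
      have h4 : (ρ J s - μ s) * (a s - a s0) ≤ a s - a s0 := by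
        have := hρ1 J s
        have := hμpos s
        nlinarith
      have := mul_le_mul_of_nonneg_left h4 hm0.le
      linarith
    rw [hfa, hz] at hv
    rw [hfa] at hf1
    have h5 : ∑ s, -(m * (ρ J s - μ s)) * a s = -(m * ∑ s, (ρ J s - μ s) * (a s - a s0)) := by
      rw [← hz, Finset.mul_sum, ← Finset.sum_neg_distrib]
      exact Finset.sum_congr rfl fun s _ => by ring
    rw [h5] at hf1
    linarith
  choose c hc0 hc using key
  let α : 𝓘 → ℝ := fun I => m + ∑ J, c J I
  have hα : ∀ I, 0 < α I := fun I =>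
    add_pos_of_pos_of_nonneg hm0 (Finset.sum_nonneg fun J _ => hc0 J I)
  have hsum : ∀ s, ∑ I, α I * (ρ I s - μ s) = 0 := by
    intro s
    simp only [α, add_mul, Finset.sum_add_distrib, Finset.sum_mul]
    rw [Finset.sum_comm]
    simp [hc]
  have hI : Nonempty 𝓘 := ⟨e ⟨Finset.univ, Finset.univ_nonempty⟩⟩
  have hA : 0 < ∑ I, α I := Finset.sum_pos (fun I _ => hα I) Finset.univ_nonempty
  have hsum2 : ∀ s, ∑ I, α I * ρ I s = (∑ I, α I) * μ s := by
    intro s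
    have := hsum s
    simp only [mul_sub, Finset.sum_sub_distrib, ← Finset.sum_mul] at this
    linarith
  generalize hAe : ∑ I, α I = A at hA hsum2
  have htot : ∀ I, ∑ s', (α I * ρ I s' / (A * μ s')) * μ s' = α I / A := by
    intro I
    have : ∀ s', (α I * ρ I s' / (A * μ s')) * μ s' = α I / A * ρ I s' := by
      intro s'
      have := (hμpos s').ne'
      field_simp
    simp only [this]
    rw [← Finset.mul_sum, (hρ I).2, mul_one]
  refine ⟨fun s I => α I * ρ I s / (A * μ s), fun s => ⟨fun I => ?_, ?_⟩, fun I => ⟨?_, fun s => ?_⟩⟩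
  · exact div_nonneg (mul_nonneg (hα I).le ((hρ I).1 s)) (mul_pos hA (hμpos s)).le
  · rw [← Finset.sum_div, hsum2]
    exact div_self (mul_pos hA (hμpos s)).ne'
  · rw [htot]; exact div_pos (hα I) hA
  · rw [htot]
    have := (hμpos s).ne'
    have := (hα I).ne'
    field_simp
end

section
/- Let n ≥ 2 and μ ∈ Δ_n, and let d, d' : Δ_n → ℝ both be distance functions with respect to μ that are locally nonsatiated with respect to μ and weakly continuous. Suppose that for all π, π' ∈ Δ_n: d(π) > d(π') implies d'(π) ≥ d'(π'), and d'(π) > d'(π') implies d(π) ≥ d(π'). Then for all π, π' ∈ Δ_n: d(π) > d(π') if and only if d'(π) > d'(π'). -/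
open Finset

/-- two locally nonsatiated, weakly continuous distance functions w.r.t. `μ`
satisfying the mutual weak-monotonicity conditions are ordinally equivalent. -/
theorem stmt5 (n : ℕ) (hn : 2 ≤ n)
    (Δ : Set (EuclideanSpace ℝ (Fin n)))
    (hΔ : Δ = {π : EuclideanSpace ℝ (Fin n) | (∀ i, 0 ≤ π i) ∧ ∑ i, π i = 1})
    (μ : EuclideanSpace ℝ (Fin n)) (hμ : μ ∈ Δ)
    (d d' : EuclideanSpace ℝ (Fin n) → ℝ)
    -- `d` is a distance function with respect to `μ`
    (hd_mix : ∀ π ∈ Δ, ∀ π' ∈ Δ, π ≠ π' → d π = d π' →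
      ∃ l ∈ Set.Ioo (0 : ℝ) 1, d (l • π + (1 - l) • π') < d π)
    (hd_min : ∀ π ∈ Δ, π ≠ μ → d μ < d π)
    -- `d'` is a distance function with respect to `μ`
    (hd'_mix : ∀ π ∈ Δ, ∀ π' ∈ Δ, π ≠ π' → d' π = d' π' →
      ∃ l ∈ Set.Ioo (0 : ℝ) 1, d' (l • π + (1 - l) • π') < d' π)
    (hd'_min : ∀ π ∈ Δ, π ≠ μ → d' μ < d' π)
    -- local nonsatiation with respect to `μ`
    (hd_lns : ∀ π ∈ Δ, π ≠ μ → ∀ ε > (0 : ℝ), ∃ π' ∈ Δ, ‖π - π'‖ < ε ∧ d π' < d π)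
    (hd'_lns : ∀ π ∈ Δ, π ≠ μ → ∀ ε > (0 : ℝ), ∃ π' ∈ Δ, ‖π - π'‖ < ε ∧ d' π' < d' π)
    -- weak continuity
    (hd_wc : ∀ π ∈ Δ, ∀ π' ∈ Δ, d π < d π' →
      ∃ ε > (0 : ℝ), ∀ π'' ∈ Δ, ‖π' - π''‖ < ε → d π < d π'')
    (hd'_wc : ∀ π ∈ Δ, ∀ π' ∈ Δ, d' π < d' π' →
      ∃ ε > (0 : ℝ), ∀ π'' ∈ Δ, ‖π' - π''‖ < ε → d' π < d' π'')
    -- mutual weak monotonicity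
    (hmono : ∀ π ∈ Δ, ∀ π' ∈ Δ, (d π' < d π → d' π' ≤ d' π) ∧ (d' π' < d' π → d π' ≤ d π)) :
    ∀ π ∈ Δ, ∀ π' ∈ Δ, (d π' < d π ↔ d' π' < d' π) := by
  have key : ∀ f g : EuclideanSpace ℝ (Fin n) → ℝ,
      (∀ π ∈ Δ, π ≠ μ → f μ < f π) →
      (∀ π ∈ Δ, π ≠ μ → ∀ ε > (0 : ℝ), ∃ π' ∈ Δ, ‖π - π'‖ < ε ∧ g π' < g π) →
      (∀ π ∈ Δ, ∀ π' ∈ Δ, f π < f π' →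
        ∃ ε > (0 : ℝ), ∀ π'' ∈ Δ, ‖π' - π''‖ < ε → f π < f π'') →
      (∀ π ∈ Δ, ∀ π' ∈ Δ, (f π' < f π → g π' ≤ g π) ∧ (g π' < g π → f π' ≤ f π)) →
      ∀ π ∈ Δ, ∀ π' ∈ Δ, f π' < f π → g π' < g π := by
    intro f g hmin hlns hwc hm π hπ π' hπ' h
    by_contra hg
    have hne : π ≠ μ := by
      rintro rfl
      by_cases e : π' = π
      · rw [e] at h
        exact lt_irrefl _ h
      · exact lt_asymm h (hmin π' hπ' e)
    obtain ⟨ε, hε, hc⟩ := hwc π' hπ' π hπ h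
    obtain ⟨ρ, hρ, hn1, hn2⟩ := hlns π hπ hne ε hε
    have h1 := hc ρ hρ hn1
    have h2 := (hm π' hπ' ρ hρ).2 (lt_of_lt_of_le hn2 (not_lt.mp hg))
    exact absurd h1 (not_lt.mpr h2)
  intro π hπ π' hπ'
  exact ⟨key d d' hd_min hd'_lns hd_wc hmono π hπ π' hπ',
    key d' d hd'_min hd_lns hd'_wc (fun a ha b hb => (hmono a ha b hb).symm) π hπ π' hπ'⟩
end

section
/- Let S be a finite set, E a nonempty subset of S, and μ, ν probability distributions on S with μ(E) > 0 and ν(E) > 0. Then the following are equivalent: (i) for all functions a, b : S → ℝ, (1/μ(E))·Σ_{s∈E} μ(s)a(s) ≥ (1/μ(E))·Σ_{s∈E} μ(s)b(s) holds if and only if (1/ν(E))·Σ_{s∈E} ν(s)a(s) ≥ (1/ν(E))·Σ_{s∈E} ν(s)b(s); (ii) ν(s) = ν(E)·μ(s)/μ(E) for every s ∈ E. -/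
open Finset

/-- two distributions induce the same conditional expected-utility comparisons
on an event `E` iff `ν` is proportional to `μ` on `E`. -/
theorem stmt6 {S : Type*} [Fintype S] (E : Finset S) (hE : E.Nonempty)
    (μ ν : S → ℝ)
    (hμpos : ∀ s, 0 ≤ μ s) (hμsum : ∑ s, μ s = 1)
    (hνpos : ∀ s, 0 ≤ ν s) (hνsum : ∑ s, ν s = 1)
    (hμE : 0 < ∑ s ∈ E, μ s) (hνE : 0 < ∑ s ∈ E, ν s) :
    (∀ a b : S → ℝ,
      ((1 / ∑ s ∈ E, μ s) * ∑ s ∈ E, μ s * b s ≤ (1 / ∑ s ∈ E, μ s) * ∑ s ∈ E, μ s * a s ↔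
       (1 / ∑ s ∈ E, ν s) * ∑ s ∈ E, ν s * b s ≤ (1 / ∑ s ∈ E, ν s) * ∑ s ∈ E, ν s * a s))
    ↔ (∀ s ∈ E, ν s = (∑ s' ∈ E, ν s') * μ s / ∑ s' ∈ E, μ s') := by
  classical
  constructor
  · intro h t ht
    have key : ∀ π : S → ℝ, ∑ s ∈ E, π s * (if s = t then (1 : ℝ) else 0) = π t := by
      intro π
      simp [ht]
    have h1 := h (fun s => if s = t then 1 else 0) (fun _ => μ t / ∑ s ∈ E, μ s)
    have h2 := h (fun _ => μ t / ∑ s ∈ E, μ s) (fun s => if s = t then 1 else 0)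
    simp only [key, ← Finset.sum_mul] at h1 h2
    generalize (∑ s ∈ E, μ s) = M at *
    generalize (∑ s ∈ E, ν s) = N at *
    have e : M * (μ t / M) = μ t := by field_simp
    rw [e] at h1 h2
    have h3 := h1.1 le_rfl
    have h4 := h2.1 le_rfl
    have h5 := le_antisymm h3 h4
    have h6 := mul_left_cancel₀ (one_div_pos.2 hνE).ne' h5
    rw [← h6]
    ring
  · intro h a b
    have key : ∀ x : S → ℝ, (1 / ∑ s ∈ E, ν s) * ∑ s ∈ E, ν s * x s
        = (1 / ∑ s ∈ E, μ s) * ∑ s ∈ E, μ s * x s := by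
      intro x
      have e : ∑ s ∈ E, ν s * x s
          = ((∑ s ∈ E, ν s) / ∑ s ∈ E, μ s) * ∑ s ∈ E, μ s * x s := by
        rw [Finset.mul_sum]
        refine Finset.sum_congr rfl fun s hs => ?_
        nth_rewrite 1 [h s hs]
        ring
      rw [e]
      generalize (∑ s ∈ E, μ s) = M at *
      generalize (∑ s ∈ E, ν s) = N at *
      field_simp
    rw [key, key]
end

section
/- Let n ≥ 2, let μ ∈ Δ_n have full support, let m := min_j μ_j, and fix i₀ with μ_{i₀} = m. For each i ∈ {1,…,n} let d_i : [0,1] → ℝ be twice differentiable with d_i'' > 0. Assume that for every i ≠ i₀ and every α ∈ (0,1], the minimizer of t ↦ d_{i₀}(α−t) + d_i(t) over t ∈ [0,α] is t = α·μ_i/(μ_{i₀}+μ_i). Then there exists a strictly concave function σ : [0, 1/(2m)] → ℝ such that Σ_{i=1}^n d_i(π_i) = −Σ_{i=1}^n μ_i σ(π_i/μ_i) for every π ∈ Δ_n satisfying π_i ≤ μ_i/(μ_i + m) for all i. -/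
open Finset

lemma aux_convex (f f' f'' : ℝ → ℝ)
    (h1 : ∀ x ∈ Set.Icc (0 : ℝ) 1, HasDerivWithinAt f (f' x) (Set.Icc (0 : ℝ) 1) x)
    (h2 : ∀ x ∈ Set.Icc (0 : ℝ) 1, HasDerivWithinAt f' (f'' x) (Set.Icc (0 : ℝ) 1) x)
    (h3 : ∀ x ∈ Set.Icc (0 : ℝ) 1, 0 < f'' x) : StrictConvexOn ℝ (Set.Icc (0:ℝ) 1) f := by
  have hd : ∀ x ∈ Set.Ioo (0:ℝ) 1, HasDerivAt f (f' x) x := fun x hx =>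
    (h1 x ⟨hx.1.le, hx.2.le⟩).hasDerivAt (Icc_mem_nhds hx.1 hx.2)
  have hd2 : ∀ x ∈ Set.Ioo (0:ℝ) 1, HasDerivAt f' (f'' x) x := fun x hx =>
    (h2 x ⟨hx.1.le, hx.2.le⟩).hasDerivAt (Icc_mem_nhds hx.1 hx.2)
  have hm : StrictMonoOn f' (Set.Icc (0:ℝ) 1) := by
    apply strictMonoOn_of_deriv_pos (convex_Icc 0 1)
    · exact fun x hx => (h2 x hx).continuousWithinAt
    · intro x hx
      rw [interior_Icc] at hx
      rw [(hd2 x hx).deriv]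
      exact h3 x ⟨hx.1.le, hx.2.le⟩
  apply StrictMonoOn.strictConvexOn_of_deriv (convex_Icc 0 1)
  · exact fun x hx => (h1 x hx).continuousWithinAt
  · rw [interior_Icc]
    intro x hx y hy hxy
    rw [(hd x hx).deriv, (hd y hy).deriv]
    exact hm ⟨hx.1.le, hx.2.le⟩ ⟨hy.1.le, hy.2.le⟩ hxy

/-- integrate the first order condition -/
lemma aux_key (f f' g g' : ℝ → ℝ) (m p : ℝ) (hm : 0 < m) (hp : 0 < p)
    (hf : ∀ x ∈ Set.Icc (0 : ℝ) 1, HasDerivWithinAt f (f' x) (Set.Icc (0 : ℝ) 1) x)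
    (hg : ∀ x ∈ Set.Icc (0 : ℝ) 1, HasDerivWithinAt g (g' x) (Set.Icc (0 : ℝ) 1) x)
    (hmin : ∀ α : ℝ, 0 < α → α ≤ 1 →
      ∀ t ∈ Set.Icc (0 : ℝ) α, t ≠ α * p / (m + p) →
        f (α - α * p / (m + p)) + g (α * p / (m + p)) < f (α - t) + g t)
    (s : ℝ) (hs0 : 0 ≤ s) (hs : s * (m + p) ≤ 1) :
    m * g (p * s) - p * f (m * s) = m * g 0 - p * f 0 := by
  rcases hs0.eq_or_lt with rfl | hs0
  · simp
  have hin : ∀ c ∈ Set.Ioo 0 s, m * c ∈ Set.Ioo (0:ℝ) 1 ∧ p * c ∈ Set.Ioo (0:ℝ) 1 := by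
    intro c hc
    have h1 := mul_pos hm hc.1
    have h2 := mul_pos hp hc.1
    have h3 : c * (m + p) < s * (m + p) := by nlinarith [hc.2]
    exact ⟨⟨h1, by nlinarith⟩, ⟨h2, by nlinarith⟩⟩
  have hF : ∀ x ∈ Set.Ioo (0:ℝ) 1, HasDerivAt f (f' x) x := fun x hx =>
    (hf x ⟨hx.1.le, hx.2.le⟩).hasDerivAt (Icc_mem_nhds hx.1 hx.2)
  have hG : ∀ x ∈ Set.Ioo (0:ℝ) 1, HasDerivAt g (g' x) x := fun x hx =>
    (hg x ⟨hx.1.le, hx.2.le⟩).hasDerivAt (Icc_mem_nhds hx.1 hx.2)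
  have foc : ∀ c ∈ Set.Ioo 0 s, g' (p * c) = f' (m * c) := by
    intro c hc
    obtain ⟨hmc, hpc⟩ := hin c hc
    have e1 : c * (m + p) * p / (m + p) = p * c := by field_simp
    have e2 : c * (m + p) - p * c = m * c := by ring
    have hloc : IsLocalMin (fun t => f (c * (m + p) - t) + g t) (p * c) := by
      have : Set.Icc 0 (c * (m + p)) ∈ nhds (p * c) :=
        Icc_mem_nhds hpc.1 (by nlinarith [hmc.1])
      filter_upwards [this] with t ht
      by_cases h : t = p * c
      · rw [h]
      · have := hmin (c * (m + p)) (mul_pos hc.1 (by positivity))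
          (by nlinarith [hc.2]) t ht (by rwa [e1])
        rw [e1] at this
        exact this.le
    have hder : HasDerivAt (fun t => f (c * (m + p) - t) + g t)
        (-(f' (m * c)) + g' (p * c)) (p * c) := by
      have := hF (m * c) hmc
      rw [← e2] at this
      have h2 := (HasDerivAt.comp_const_sub (c * (m + p)) (p * c) this).add (hG _ hpc)
      rw [e2] at h2
      exact h2
    have := hloc.hasDerivAt_eq_zero hder
    linarith
  have hcont : ContinuousOn (fun x => m * g (p * x) - p * f (m * x)) (Set.Icc 0 s) := by
    have cf : ContinuousOn f (Set.Icc 0 1) := fun x hx => (hf x hx).continuousWithinAt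
    have cg : ContinuousOn g (Set.Icc 0 1) := fun x hx => (hg x hx).continuousWithinAt
    have i1 : Set.MapsTo (fun x => p * x) (Set.Icc 0 s) (Set.Icc 0 1) := by
      intro x hx
      refine ⟨mul_nonneg hp.le hx.1, ?_⟩
      have := hx.2
      show p * x ≤ 1
      nlinarith [mul_pos hm hs0]
    have i2 : Set.MapsTo (fun x => m * x) (Set.Icc 0 s) (Set.Icc 0 1) := by
      intro x hx
      refine ⟨mul_nonneg hm.le hx.1, ?_⟩
      have := hx.2
      show m * x ≤ 1
      nlinarith [mul_pos hp hs0]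
    exact (continuousOn_const.mul (cg.comp (by fun_prop) i1)).sub
      (continuousOn_const.mul (cf.comp (by fun_prop) i2))
  obtain ⟨c, hc, h⟩ := exists_hasDerivAt_eq_slope
    (fun x => m * g (p * x) - p * f (m * x))
    (fun x => m * (p * g' (p * x)) - p * (m * f' (m * x))) hs0 hcont (by
      intro x hx
      obtain ⟨hmx, hpx⟩ := hin x hx
      have a1 : HasDerivAt (fun x => g (p * x)) (p * g' (p * x)) x := by
        have h0 : HasDerivAt (fun x => p * x) p x := by
          simpa using (hasDerivAt_id x).const_mul p
        rw [mul_comm p (g' _)]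
        exact HasDerivAt.comp x (hG _ hpx) h0
      have a2 : HasDerivAt (fun x => f (m * x)) (m * f' (m * x)) x := by
        have h0 : HasDerivAt (fun x => m * x) m x := by
          simpa using (hasDerivAt_id x).const_mul m
        rw [mul_comm m (f' _)]
        exact HasDerivAt.comp x (hF _ hmx) h0
      exact (a1.const_mul m).sub (a2.const_mul p))
  rw [foc c hc, eq_div_iff (by linarith)] at h
  simp only [mul_zero] at h
  linarith

/-- an additively separable distance whose pairwise minimizers are the
proportional (Bayesian) posteriors must be a Bayesian divergence on the indicated region. -/
theorem stmt7 (n : ℕ) (hn : 2 ≤ n) (μ : Fin n → ℝ)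
    (hμpos : ∀ i, 0 < μ i) (hμsum : ∑ i, μ i = 1)
    (i₀ : Fin n) (hi₀ : ∀ j, μ i₀ ≤ μ j)
    (d d' d'' : Fin n → ℝ → ℝ)
    (hderiv1 : ∀ i, ∀ x ∈ Set.Icc (0 : ℝ) 1,
      HasDerivWithinAt (d i) (d' i x) (Set.Icc (0 : ℝ) 1) x)
    (hderiv2 : ∀ i, ∀ x ∈ Set.Icc (0 : ℝ) 1,
      HasDerivWithinAt (d' i) (d'' i x) (Set.Icc (0 : ℝ) 1) x)
    (hconv : ∀ i, ∀ x ∈ Set.Icc (0 : ℝ) 1, 0 < d'' i x)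
    (hmin : ∀ i, i ≠ i₀ → ∀ α : ℝ, 0 < α → α ≤ 1 →
      ∀ t ∈ Set.Icc (0 : ℝ) α, t ≠ α * μ i / (μ i₀ + μ i) →
        d i₀ (α - α * μ i / (μ i₀ + μ i)) + d i (α * μ i / (μ i₀ + μ i)) <
          d i₀ (α - t) + d i t) :
    ∃ σ : ℝ → ℝ, StrictConcaveOn ℝ (Set.Icc (0 : ℝ) (1 / (2 * μ i₀))) σ ∧
      ∀ π : Fin n → ℝ, (∀ i, 0 ≤ π i) → (∑ i, π i = 1) →
        (∀ i, π i ≤ μ i / (μ i + μ i₀)) →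
        ∑ i, d i (π i) = -∑ i, μ i * σ (π i / μ i) := by
  have hm := hμpos i₀
  refine ⟨fun s => -(d i₀ (μ i₀ * s) - d i₀ 0) / μ i₀ - ∑ i, d i 0, ⟨convex_Icc _ _, ?_⟩, ?_⟩
  · have hc := aux_convex _ _ _ (hderiv1 i₀) (hderiv2 i₀) (hconv i₀)
    intro x hx y hy hxy a b ha hb hab
    have hin : ∀ z ∈ Set.Icc (0 : ℝ) (1 / (2 * μ i₀)), μ i₀ * z ∈ Set.Icc (0:ℝ) 1 := by
      intro z hz
      have := hz.2
      rw [le_div_iff₀ (by positivity)] at this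
      exact ⟨mul_nonneg hm.le hz.1, by nlinarith [mul_nonneg hm.le hz.1]⟩
    have := hc.2 (hin x hx) (hin y hy)
      (fun h => hxy (mul_left_cancel₀ hm.ne' h)) ha hb hab
    simp only [smul_eq_mul] at this ⊢
    have e : μ i₀ * (a * x + b * y) = a * (μ i₀ * x) + b * (μ i₀ * y) := by ring
    rw [e]
    have e2 : b = 1 - a := by linarith
    have h3 := div_lt_div_of_pos_right this hm
    rw [← sub_pos] at h3 ⊢
    convert h3 using 1
    subst e2
    ring
  · intro π h0 h1 h2
    have key : ∀ i, d i (π i) =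
        μ i * ((d i₀ (μ i₀ * (π i / μ i)) - d i₀ 0) / μ i₀) + d i 0 := by
      intro i
      have hp := hμpos i
      have e : μ i * (π i / μ i) = π i := by field_simp
      by_cases hi : i = i₀
      · subst hi
        rw [e]; field_simp; ring
      · have := aux_key (d i₀) (d' i₀) (d i) (d' i) (μ i₀) (μ i) hm hp (hderiv1 i₀) (hderiv1 i)
          (hmin i hi) (π i / μ i) (div_nonneg (h0 i) hp.le) (by
            have := h2 i
            rw [le_div_iff₀ (by positivity)] at this
            rw [div_mul_eq_mul_div, div_le_one hp]
            linarith)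
        rw [e] at this
        field_simp at this ⊢
        linarith
    have hS : ∑ i, μ i * (∑ j, d j 0) = ∑ j, d j 0 := by
      rw [← Finset.sum_mul, hμsum, one_mul]
    rw [Finset.sum_congr rfl (fun i _ => key i), Finset.sum_add_distrib, ← hS,
      ← Finset.sum_add_distrib, ← Finset.sum_neg_distrib]
    refine Finset.sum_congr rfl fun i _ => ?_
    rw [hS]
    ring
end

section
/- Let n ≥ 2, let μ ∈ Δ_n have full support, let σ : [0,∞) → ℝ be strictly concave and differentiable with σ(1) = 0, let E be a nonempty proper subset of {1,…,n}, and let 0 < α ≤ β < 1. Define γ := α if μ(E) < α, γ := μ(E) if α ≤ μ(E) ≤ β, and γ := β if μ(E) > β. Then the unique minimizer of the Bayesian divergence d_μ(π) = −Σ_{i=1}^n μ_i σ(π_i/μ_i) over {π ∈ Δ_n : α ≤ π(E) ≤ β} is the vector π* given by π*_i = γ·μ_i/μ(E) for i ∈ E and π*_i = (1−γ)·μ_i/μ(E^c) for i ∉ E. -/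
lemma stmt8_tangent (σ : ℝ → ℝ) (hσconc : StrictConcaveOn ℝ (Set.Ici (0 : ℝ)) σ)
    (hσdiff : DifferentiableOn ℝ σ (Set.Ici (0 : ℝ))) (a : ℝ) (ha : 0 < a) (x : ℝ) (hx : 0 ≤ x)
    (hxa : x ≠ a) : σ x < σ a + deriv σ a * (x - a) := by
  have hda : HasDerivAt σ (deriv σ a) a :=
    ((hσdiff a ha.le).differentiableAt (Ici_mem_nhds ha)).hasDerivAt
  rcases lt_or_gt_of_ne hxa with h | h
  · have := hσconc.lt_slope_of_hasDerivAt (Set.mem_Ici.2 hx) (Set.mem_Ici.2 ha.le) h hda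
    rw [slope_def_field, lt_div_iff₀ (by linarith)] at this
    linarith
  · have := hσconc.slope_lt_of_hasDerivAt (Set.mem_Ici.2 ha.le) (Set.mem_Ici.2 hx) h hda
    rw [slope_def_field, div_lt_iff₀ (by linarith)] at this
    linarith

/-- for interval information `{π : α ≤ π(E) ≤ β}`, the unique minimizer of any
Bayesian divergence is the proportional posterior at `γ`, the point of `[α,β]` closest
to `μ(E)`. -/
theorem stmt8 (n : ℕ) (hn : 2 ≤ n) (μ : Fin n → ℝ)
    (hμpos : ∀ i, 0 < μ i) (hμsum : ∑ i, μ i = 1)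
    (σ : ℝ → ℝ) (hσconc : StrictConcaveOn ℝ (Set.Ici (0 : ℝ)) σ)
    (hσdiff : DifferentiableOn ℝ σ (Set.Ici (0 : ℝ))) (hσ1 : σ 1 = 0)
    (E : Finset (Fin n)) (hE : E.Nonempty) (hEne : E ≠ Finset.univ)
    (α β : ℝ) (hα : 0 < α) (hαβ : α ≤ β) (hβ : β < 1)
    (γ : ℝ)
    (hγ₁ : (∑ i ∈ E, μ i) < α → γ = α)
    (hγ₂ : α ≤ (∑ i ∈ E, μ i) → (∑ i ∈ E, μ i) ≤ β → γ = ∑ i ∈ E, μ i)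
    (hγ₃ : β < (∑ i ∈ E, μ i) → γ = β)
    (d : (Fin n → ℝ) → ℝ) (hd : ∀ π, d π = -∑ i, μ i * σ (π i / μ i))
    (C : Set (Fin n → ℝ))
    (hC : C = {π | (∀ i, 0 ≤ π i) ∧ (∑ i, π i = 1) ∧
      α ≤ (∑ i ∈ E, π i) ∧ (∑ i ∈ E, π i) ≤ β})
    (πstar : Fin n → ℝ)
    (hπstar : ∀ i, πstar i = if i ∈ E then γ * μ i / (∑ j ∈ E, μ j)
      else (1 - γ) * μ i / (∑ j ∈ Eᶜ, μ j)) :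
    πstar ∈ C ∧ ∀ π ∈ C, π ≠ πstar → d πstar < d π := by
  have T := stmt8_tangent σ hσconc hσdiff
  have hsplit : ∀ f : Fin n → ℝ, ∑ i ∈ E, f i + ∑ i ∈ Eᶜ, f i = ∑ i, f i :=
    fun f => Finset.sum_add_sum_compl E f
  have hM : 0 < ∑ i ∈ E, μ i := Finset.sum_pos (fun i _ => hμpos i) hE
  have hN : 0 < ∑ i ∈ Eᶜ, μ i := by
    apply Finset.sum_pos (fun i _ => hμpos i)
    rw [Finset.nonempty_iff_ne_empty]
    intro h
    exact hEne (by simpa using h)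
  have hMN := hsplit μ
  rw [hμsum] at hMN
  set M := ∑ i ∈ E, μ i with hMdef
  set N := ∑ i ∈ Eᶜ, μ i with hNdef
  have hγ : α ≤ γ ∧ γ ≤ β := by
    rcases lt_or_ge M α with h | h
    · rw [hγ₁ h]; exact ⟨le_rfl, hαβ⟩
    · rcases lt_or_ge β M with h' | h'
      · rw [hγ₃ h']; exact ⟨hαβ, le_rfl⟩
      · rw [hγ₂ h h']; exact ⟨h, h'⟩
  have hg0 : 0 < γ := by linarith [hγ.1]
  have hg1 : 0 < 1 - γ := by linarith [hγ.2]
  have ha : 0 < γ / M := by positivity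
  have hb : 0 < (1 - γ) / N := by positivity
  have hsE : ∀ i ∈ E, πstar i = γ / M * μ i := by
    intro i hi; rw [hπstar, if_pos hi]; ring
  have hsC : ∀ i ∈ Eᶜ, πstar i = (1 - γ) / N * μ i := by
    intro i hi; rw [hπstar, if_neg (by simpa using hi)]; ring
  have hSE : ∑ i ∈ E, πstar i = γ := by
    rw [Finset.sum_congr rfl hsE, ← Finset.mul_sum, ← hMdef]; field_simp
  have hSC : ∑ i ∈ Eᶜ, πstar i = 1 - γ := by
    rw [Finset.sum_congr rfl hsC, ← Finset.mul_sum, ← hNdef]; field_simp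
  have hS0 : ∀ i, 0 < πstar i := by
    intro i
    have := hμpos i
    by_cases hi : i ∈ E
    · rw [hsE i hi]; positivity
    · rw [hsC i (by simpa using hi)]; positivity
  constructor
  · rw [hC]
    refine ⟨fun i => (hS0 i).le, ?_, ?_, ?_⟩
    · rw [← hsplit, hSE, hSC]; ring
    · rw [hSE]; exact hγ.1
    · rw [hSE]; exact hγ.2
  · intro π hπ hne
    rw [hC] at hπ
    obtain ⟨p0, p1, pα, pβ⟩ := hπ
    have hpc := hsplit π
    rw [p1] at hpc
    have key : ∀ i, π i ≠ πstar i → μ i * σ (π i / μ i) <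
        μ i * σ (πstar i / μ i) + deriv σ (πstar i / μ i) * (π i - πstar i) := by
      intro i hi
      have hm := hμpos i
      have h := T (πstar i / μ i) (div_pos (hS0 i) hm) (π i / μ i) (div_nonneg (p0 i) hm.le)
        (by intro h; exact hi (by field_simp at h; exact h))
      have h2 := mul_lt_mul_of_pos_left h hm
      have h3 : μ i * (σ (πstar i / μ i) + deriv σ (πstar i / μ i) * (π i / μ i - πstar i / μ i))
        = μ i * σ (πstar i / μ i) + deriv σ (πstar i / μ i) * (π i - πstar i) := by
        field_simp
      linarith
    obtain ⟨j, hj⟩ := Function.ne_iff.1 hne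
    have hlt : ∑ i, μ i * σ (π i / μ i) < ∑ i, (μ i * σ (πstar i / μ i) +
        deriv σ (πstar i / μ i) * (π i - πstar i)) := by
      apply Finset.sum_lt_sum
      · intro i _
        by_cases h : π i = πstar i
        · rw [h]; simp
        · exact (key i h).le
      · exact ⟨j, Finset.mem_univ _, key j hj⟩
    rw [Finset.sum_add_distrib] at hlt
    have e1 : ∑ i ∈ E, deriv σ (πstar i / μ i) * (π i - πstar i)
        = deriv σ (γ / M) * (∑ i ∈ E, π i - γ) := by
      rw [← hSE, ← Finset.sum_sub_distrib, Finset.mul_sum, hSE]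
      refine Finset.sum_congr rfl fun i hi => ?_
      have : πstar i / μ i = γ / M := by
        rw [hsE i hi, mul_div_cancel_right₀ _ (hμpos i).ne']
      rw [this]
    have e2 : ∑ i ∈ Eᶜ, deriv σ (πstar i / μ i) * (π i - πstar i)
        = deriv σ ((1 - γ) / N) * (∑ i ∈ Eᶜ, π i - (1 - γ)) := by
      rw [← hSC, ← Finset.sum_sub_distrib, Finset.mul_sum, hSC]
      refine Finset.sum_congr rfl fun i hi => ?_
      have : πstar i / μ i = (1 - γ) / N := by
        rw [hsC i hi, mul_div_cancel_right₀ _ (hμpos i).ne']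
      rw [this]
    have hanti : ∀ a b : ℝ, 0 < b → b < a → deriv σ a < deriv σ b := by
      intro a b hb hab
      have h1 := T a (hb.trans hab) b hb.le hab.ne
      have h2 := T b hb a (hb.trans hab).le hab.ne'
      by_contra! hcon
      nlinarith [mul_nonneg (sub_nonneg.2 hcon) (sub_nonneg.2 hab.le)]
    have hfin : deriv σ (γ / M) * (∑ i ∈ E, π i - γ)
        + deriv σ ((1 - γ) / N) * (∑ i ∈ Eᶜ, π i - (1 - γ)) ≤ 0 := by
      have hq : ∑ i ∈ Eᶜ, π i = 1 - ∑ i ∈ E, π i := by linarith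
      rw [hq]
      rcases lt_or_ge M α with h | h
      · have hg := hγ₁ h
        have := hanti (γ / M) ((1 - γ) / N) hb (by
          rw [div_lt_div_iff₀ hN hM]; nlinarith)
        nlinarith
      · rcases lt_or_ge β M with h' | h'
        · have hg := hγ₃ h'
          have := hanti ((1 - γ) / N) (γ / M) ha (by
            rw [div_lt_div_iff₀ hM hN]; nlinarith)
          nlinarith
        · have hg := hγ₂ h h'
          have e : (1 - γ) / N = γ / M := by
            rw [div_eq_div_iff hN.ne' hM.ne', hg]
            rw [show N = 1 - M by linarith]; ring
          rw [e]
          apply le_of_eq; ring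
    have e3 := hsplit (fun i => deriv σ (πstar i / μ i) * (π i - πstar i))
    rw [e1, e2] at e3
    rw [hd, hd]
    linarith
end

section
/- Let k ∈ ℝ and let σ : (0,1] → ℝ be continuous with σ(1) = 0 and satisfy σ(αβ) = σ(α) + σ(β) + k·σ(α)·σ(β) for all α, β ∈ (0,1]. If k = 0, then there exists ζ ∈ ℝ such that σ(x) = ζ·ln x for all x ∈ (0,1]. If k ≠ 0, then there exists γ ∈ ℝ such that σ(x) = (x^γ − 1)/k for all x ∈ (0,1]. -/
theorem cauchy_half (g : ℝ → ℝ) (hc : ContinuousOn g (Set.Ici 0))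
    (ha : ∀ x, 0 ≤ x → ∀ y, 0 ≤ y → g (x + y) = g x + g y) :
    ∀ t, 0 ≤ t → g t = g 1 * t := by
  have h0 : g 0 = 0 := by
    have := ha 0 le_rfl 0 le_rfl
    simp at this
    exact this
  let G : ℝ →+ ℝ :=
    { toFun := fun t => g (max t 0) - g (max (-t) 0)
      map_zero' := by simp
      map_add' := by
        intro x y
        have hp : ∀ z : ℝ, 0 ≤ max z 0 := fun z => le_max_right _ _
        have hd : ∀ z : ℝ, max z 0 = z + max (-z) 0 := by
          intro z
          rcases le_total z 0 with h | h
          · rw [max_eq_right h, max_eq_left (by linarith)]; ring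
          · rw [max_eq_left h, max_eq_right (by linarith)]; ring
        have e : max (x + y) 0 + (max (-x) 0 + max (-y) 0)
            = max (-(x + y)) 0 + (max x 0 + max y 0) := by
          rw [hd (x + y), hd x, hd y]; ring
        have e2 := congrArg g e
        rw [ha _ (hp _) _ (add_nonneg (hp _) (hp _)), ha _ (hp _) _ (add_nonneg (hp _) (hp _)),
          ha _ (hp _) _ (hp _), ha _ (hp _) _ (hp _)] at e2
        linarith }
  have hG : Continuous G := by
    change Continuous (fun t : ℝ => g (max t 0) - g (max (-t) 0))
    refine Continuous.sub ?_ ?_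
    · exact hc.comp_continuous (by fun_prop) (fun x => Set.mem_Ici.2 (le_max_right _ _))
    · exact hc.comp_continuous (by fun_prop) (fun x => Set.mem_Ici.2 (le_max_right _ _))
  have hGt : ∀ t, 0 ≤ t → G t = g t := by
    intro t ht
    change g (max t 0) - g (max (-t) 0) = g t
    rw [max_eq_left ht, max_eq_right (by linarith), h0, sub_zero]
  intro t ht
  have h1 := map_real_smul G hG t 1
  rw [smul_eq_mul, mul_one, smul_eq_mul, hGt t ht, hGt 1 zero_le_one] at h1
  rw [h1, mul_comm]

theorem exp_mem (t : ℝ) (ht : 0 ≤ t) : Real.exp (-t) ∈ Set.Ioc (0 : ℝ) 1 :=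
  ⟨Real.exp_pos _, Real.exp_le_one_iff.2 (by linarith)⟩

/-- solutions of the functional equation
`σ(αβ) = σ(α) + σ(β) + k σ(α) σ(β)` on `(0,1]` for continuous `σ` with `σ(1) = 0`. -/
theorem stmt11 (k : ℝ) (σ : ℝ → ℝ)
    (hcont : ContinuousOn σ (Set.Ioc (0 : ℝ) 1)) (hσ1 : σ 1 = 0)
    (hfe : ∀ α ∈ Set.Ioc (0 : ℝ) 1, ∀ β ∈ Set.Ioc (0 : ℝ) 1,
      σ (α * β) = σ α + σ β + k * σ α * σ β) :
    (k = 0 → ∃ ζ : ℝ, ∀ x ∈ Set.Ioc (0 : ℝ) 1, σ x = ζ * Real.log x) ∧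
    (k ≠ 0 → ∃ γ : ℝ, ∀ x ∈ Set.Ioc (0 : ℝ) 1, σ x = (x ^ γ - 1) / k) := by
  have hS : ContinuousOn (fun t : ℝ => σ (Real.exp (-t))) (Set.Ici 0) :=
    hcont.comp (by fun_prop) (fun t ht => exp_mem t ht)
  have hSa : ∀ x, 0 ≤ x → ∀ y, 0 ≤ y → σ (Real.exp (-(x + y))) =
      σ (Real.exp (-x)) + σ (Real.exp (-y)) + k * σ (Real.exp (-x)) * σ (Real.exp (-y)) := by
    intro x hx y hy
    rw [← hfe _ (exp_mem x hx) _ (exp_mem y hy), ← Real.exp_add]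
    congr 2; ring
  have hlog : ∀ x ∈ Set.Ioc (0 : ℝ) 1, 0 ≤ -Real.log x ∧ Real.exp (-(-Real.log x)) = x := by
    intro x hx
    refine ⟨?_, by rw [neg_neg, Real.exp_log hx.1]⟩
    have := Real.log_nonpos hx.1.le hx.2
    linarith
  constructor
  · intro hk
    have := cauchy_half _ hS (by intro x hx y hy; rw [hSa x hx y hy, hk]; ring)
    refine ⟨-σ (Real.exp (-1)), fun x hx => ?_⟩
    have h := this _ (hlog x hx).1
    simp only [(hlog x hx).2] at h
    rw [h]; ring
  · intro hk
    let F : ℝ → ℝ := fun t => 1 + k * σ (Real.exp (-t))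
    have hF : ∀ x, 0 ≤ x → ∀ y, 0 ≤ y → F (x + y) = F x * F y := by
      intro x hx y hy
      simp only [F]
      rw [hSa x hx y hy]; ring
    have hFc : ContinuousOn F (Set.Ici 0) := by
      simp only [F]
      exact continuousOn_const.add (continuousOn_const.mul hS)
    have hF0 : F 0 = 1 := by simp [F, hσ1]
    have hsq : ∀ t, 0 ≤ t → F t = F (t / 2) * F (t / 2) := by
      intro t ht
      rw [← hF _ (by linarith) _ (by linarith)]
      congr 1; ring
    have hne : ∀ t, 0 ≤ t → F t ≠ 0 := by
      intro t ht h
      have hn : ∀ n : ℕ, F (t * (1 / 2) ^ n) = 0 := by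
        intro n
        induction n with
        | zero => simpa using h
        | succ n ih =>
          rw [hsq _ (by positivity)] at ih
          have := mul_self_eq_zero.1 ih
          rw [pow_succ, ← this]; congr 1; ring
      have ht1 : Filter.Tendsto (fun n : ℕ => t * (1 / 2 : ℝ) ^ n) Filter.atTop
          (nhdsWithin 0 (Set.Ici 0)) := by
        refine tendsto_nhdsWithin_iff.2 ⟨?_, Filter.Eventually.of_forall fun n => ?_⟩
        · simpa using (tendsto_pow_atTop_nhds_zero_of_lt_one (r := (1 / 2 : ℝ))
            (by norm_num) (by norm_num)).const_mul t
        · simp only [Set.mem_Ici]; positivity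
      have h2 := (hFc 0 (by simp)).tendsto.comp ht1
      have h3 : (F ∘ fun n : ℕ => t * (1 / 2 : ℝ) ^ n) = fun _ => 0 := funext hn
      rw [h3, hF0] at h2
      exact zero_ne_one (tendsto_nhds_unique tendsto_const_nhds h2)
    have hpos : ∀ t, 0 ≤ t → 0 < F t := by
      intro t ht
      refine lt_of_le_of_ne ?_ (hne t ht).symm
      rw [hsq t ht]; exact mul_self_nonneg _
    have := cauchy_half (fun t => Real.log (F t)) (hFc.log (fun t ht => hne t ht))
      (by intro x hx y hy
          skip
          rw [hF x hx y hy, Real.log_mul (hne x hx) (hne y hy)])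
    refine ⟨-Real.log (F 1), fun x hx => ?_⟩
    have h := this _ (hlog x hx).1
    have h4 : F (-Real.log x) = x ^ (-Real.log (F 1)) := by
      rw [Real.rpow_def_of_pos hx.1, ← Real.exp_log (hpos _ (hlog x hx).1), h]
      congr 1; ring
    rw [← h4]
    simp only [F]
    rw [(hlog x hx).2]
    field_simp
    ring
end

section
/- Let σ : (0,∞) → ℝ be strictly concave and differentiable, and let a, b ∈ ℝ with 0 < a < b and a + b < 1. Define F(x,y) = −[a·σ(x/a) + b·σ(y/b) + (1−a−b)·σ((1−x−y)/(1−a−b))] on the set K = {(x,y) ∈ ℝ² : x ≥ y ≥ 0 and x + y ≤ 1}. If (x*, y*) minimizes F over K and satisfies y* > 0 and x* + y* < 1, then x* = y*. -/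
/-- an interior minimizer (with `y* > 0`, `x* + y* < 1`) of the Bayesian
divergence over the qualitative-information constraint set `{x ≥ y ≥ 0, x + y ≤ 1}`
satisfies `x* = y*`. -/
theorem stmt13 (σ : ℝ → ℝ)
    (hconc : StrictConcaveOn ℝ (Set.Ioi (0 : ℝ)) σ)
    (hdiff : DifferentiableOn ℝ σ (Set.Ioi (0 : ℝ)))
    (a b : ℝ) (ha : 0 < a) (hab : a < b) (hab1 : a + b < 1)
    (F : ℝ → ℝ → ℝ)
    (hF : ∀ x y, F x y = -(a * σ (x / a) + b * σ (y / b) +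
      (1 - a - b) * σ ((1 - x - y) / (1 - a - b))))
    (K : Set (ℝ × ℝ))
    (hK : K = {p : ℝ × ℝ | p.2 ≤ p.1 ∧ 0 ≤ p.2 ∧ p.1 + p.2 ≤ 1})
    (x y : ℝ) (hmem : (x, y) ∈ K)
    (hmin : ∀ p ∈ K, F x y ≤ F p.1 p.2)
    (hy : 0 < y) (hsum : x + y < 1) :
    x = y := by
  subst hK
  obtain ⟨h1, -, -⟩ := hmem
  simp only at h1
  by_contra hne
  have hlt : y < x := lt_of_le_of_ne h1 (Ne.symm hne)
  have hb : 0 < b := ha.trans hab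
  have hx : 0 < x := hy.trans hlt
  have hD : 0 < b * x - a * y := by nlinarith
  have hm := hmin ((x + y) / 2, (x + y) / 2) ⟨le_refl _, by simp only; linarith, by simp only; linarith⟩
  simp only [hF] at hm
  have e3 : 1 - (x + y) / 2 - (x + y) / 2 = 1 - x - y := by ring
  rw [e3] at hm
  have hX : 0 < x / a := by positivity
  have hY : 0 < y / b := by positivity
  have hXY : x / a ≠ y / b := by
    intro h
    rw [div_eq_div_iff ha.ne' hb.ne'] at h
    linarith
  obtain ⟨u, hu⟩ : ∃ u, u = b * (x - y) / (2 * (b * x - a * y)) := ⟨_, rfl⟩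
  obtain ⟨v, hv⟩ : ∃ v, v = a * (x - y) / (2 * (b * x - a * y)) := ⟨_, rfl⟩
  have hxy : 0 < x - y := by linarith
  have hu0 : 0 < u := by rw [hu]; positivity
  have hv0 : 0 < v := by rw [hv]; positivity
  have hu1 : u < 1 := by
    rw [hu, div_lt_one (by positivity)]; nlinarith
  have hv1 : v < 1 := by
    rw [hv, div_lt_one (by positivity)]; nlinarith
  have huv : a * u = b * v := by rw [hu, hv]; ring
  have c1 := hconc.2 hX hY hXY (sub_pos.2 hu1) hu0 (by ring)
  have c2 := hconc.2 hX hY hXY hv0 (sub_pos.2 hv1) (by ring)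
  simp only [smul_eq_mul] at c1 c2
  have e1 : (1 - u) * (x / a) + u * (y / b) = (x + y) / 2 / a := by
    have h2 : u * (2 * (b * x - a * y)) = b * (x - y) := by
      rw [hu, div_mul_cancel₀ _ (by positivity)]
    field_simp
    linear_combination -h2
  have e2 : v * (x / a) + (1 - v) * (y / b) = (x + y) / 2 / b := by
    have h2 : v * (2 * (b * x - a * y)) = a * (x - y) := by
      rw [hv, div_mul_cancel₀ _ (by positivity)]
    field_simp
    linear_combination h2
  rw [e1] at c1
  rw [e2] at c2
  have d1 := mul_lt_mul_of_pos_left c1 ha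
  have d2 := mul_lt_mul_of_pos_left c2 hb
  have k1 : a * u * σ (x / a) = b * v * σ (x / a) := by rw [huv]
  have k2 : a * u * σ (y / b) = b * v * σ (y / b) := by rw [huv]
  linarith
end

section
/- Let a, b, c > 0 and α, β ∈ (0,1). Let σ¹ : (0,∞) → ℝ be strictly increasing and differentiable with strictly decreasing derivative, let h : ℝ → ℝ be strictly increasing and differentiable with strictly decreasing derivative, and set σ² := h ∘ σ¹, so that (σ²)'(x) = h'(σ¹(x))·(σ¹)'(x). Suppose γ¹, γ² ∈ (0, min(α,β)) satisfy the first-order conditions (σ^k)'(γ^k/a) = (σ^k)'((α−γ^k)/b) + (σ^k)'((β−γ^k)/c) for k = 1 and k = 2, respectively. Then γ¹ < γ². -/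
theorem aux_pos (f f' : ℝ → ℝ) (x : ℝ) (hm : f x < f (x + 1))
    (hd : ∀ y, x ≤ y → HasDerivAt f (f' y) y)
    (ha : ∀ y, x < y → f' y < f' x) : 0 < f' x := by
  obtain ⟨w, hw, he⟩ := exists_hasDerivAt_eq_slope f f' (show x < x + 1 by linarith)
    (fun y hy => (hd y hy.1).continuousAt.continuousWithinAt)
    (fun y hy => hd y hy.1.le)
  have h1 := ha w hw.1
  have h2 : f' w = f (x + 1) - f x := by rw [he]; simp
  linarith

/-- comparative statics of disagreement: the agent with the more concave
transform `σ² = h ∘ σ¹` puts more weight (`γ² > γ¹`) on the common event. -/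
theorem stmt15 (a b c : ℝ) (ha : 0 < a) (hb : 0 < b) (hc : 0 < c)
    (α β : ℝ) (hα : α ∈ Set.Ioo (0 : ℝ) 1) (hβ : β ∈ Set.Ioo (0 : ℝ) 1)
    (σ₁ σ₁' : ℝ → ℝ)
    (hσ₁mono : StrictMonoOn σ₁ (Set.Ioi (0 : ℝ)))
    (hσ₁deriv : ∀ x : ℝ, 0 < x → HasDerivAt σ₁ (σ₁' x) x)
    (hσ₁'anti : StrictAntiOn σ₁' (Set.Ioi (0 : ℝ)))
    (h h' : ℝ → ℝ)
    (hhmono : StrictMono h)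
    (hhderiv : ∀ x : ℝ, HasDerivAt h (h' x) x)
    (hh'anti : StrictAnti h')
    (σ₂ σ₂' : ℝ → ℝ)
    (hσ₂ : ∀ x : ℝ, σ₂ x = h (σ₁ x))
    (hσ₂' : ∀ x : ℝ, 0 < x → σ₂' x = h' (σ₁ x) * σ₁' x)
    (γ₁ γ₂ : ℝ)
    (hγ₁ : γ₁ ∈ Set.Ioo (0 : ℝ) (min α β)) (hγ₂ : γ₂ ∈ Set.Ioo (0 : ℝ) (min α β))
    (hfoc1 : σ₁' (γ₁ / a) = σ₁' ((α - γ₁) / b) + σ₁' ((β - γ₁) / c))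
    (hfoc2 : σ₂' (γ₂ / a) = σ₂' ((α - γ₂) / b) + σ₂' ((β - γ₂) / c)) :
    γ₁ < γ₂ := by
  have hp : ∀ x, 0 < x → 0 < σ₁' x := fun x hx =>
    aux_pos σ₁ σ₁' x (hσ₁mono hx (show (0:ℝ) < x + 1 by linarith) (by linarith))
      (fun y hy => hσ₁deriv y (by linarith))
      (fun y hy => hσ₁'anti hx (show (0:ℝ) < y by linarith) hy)
  have hq : ∀ x, 0 < h' x := fun x =>
    aux_pos h h' x (hhmono (by linarith)) (fun y _ => hhderiv y) (fun y hy => hh'anti hy)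
  by_contra hcon
  have hle : γ₂ ≤ γ₁ := not_lt.mp hcon
  obtain ⟨g1, g1'⟩ := hγ₁
  obtain ⟨g2, g2'⟩ := hγ₂
  rw [lt_min_iff] at g1' g2'
  have x1 : 0 < γ₁ / a := div_pos g1 ha
  have x2 : 0 < γ₂ / a := div_pos g2 ha
  have y1 : 0 < (α - γ₁) / b := div_pos (by linarith) hb
  have y2 : 0 < (α - γ₂) / b := div_pos (by linarith) hb
  have z1 : 0 < (β - γ₁) / c := div_pos (by linarith) hc
  have z2 : 0 < (β - γ₂) / c := div_pos (by linarith) hc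
  have e1 : σ₁' (γ₁ / a) ≤ σ₁' (γ₂ / a) := hσ₁'anti.antitoneOn x2 x1 (by gcongr)
  have e2 : σ₁' ((α - γ₂) / b) ≤ σ₁' ((α - γ₁) / b) :=
    hσ₁'anti.antitoneOn y1 y2 (by gcongr)
  have e3 : σ₁' ((β - γ₂) / c) ≤ σ₁' ((β - γ₁) / c) :=
    hσ₁'anti.antitoneOn z1 z2 (by gcongr)
  rw [hσ₂' _ x2, hσ₂' _ y2, hσ₂' _ z2] at hfoc2
  generalize γ₂ / a = x at *
  generalize (α - γ₂) / b = y at *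
  generalize (β - γ₂) / c = z at *
  have py := hp y y2
  have pz := hp z z2
  have ly : x < y := (hσ₁'anti.lt_iff_gt y2 x2).1 (by linarith)
  have lz : x < z := (hσ₁'anti.lt_iff_gt z2 x2).1 (by linarith)
  have ky := mul_lt_mul_of_pos_right (hh'anti (hσ₁mono x2 y2 ly)) py
  have kz := mul_lt_mul_of_pos_right (hh'anti (hσ₁mono x2 z2 lz)) pz
  have kx : h' (σ₁ x) * (σ₁' y + σ₁' z) ≤ h' (σ₁ x) * σ₁' x :=
    mul_le_mul_of_nonneg_left (by linarith) (hq _).le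
  linarith
end

section
/- Let S be a finite subset of (0,1) with |S| ≥ 2, let μ and ν be full-support probability distributions on S, let c > 0, and set m := (Σ_{s∈S} s)/|S|. Assume Σ_{s∈S} μ(s)·(s−m)/ν(s) > 0, c > (Σ_{s∈S} μ(s)·((s−m)/ν(s))²) / (2·Σ_{s∈S} μ(s)·(s−m)/ν(s)), and c > max_{s∈S} |s−m|/ν(s). Define π* by π*(s) = ν(s) + (s−m)/(2c). Then: (a) π* is a probability distribution on S with π*(s) > 0 for all s; (b) Σ_{s∈S} μ(s)·ln(π*(s)/ν(s)) > 0; and (c) π* is the unique maximizer of the function π ↦ Σ_{s∈S} s·π(s) − c·Σ_{s∈S} (π(s)−ν(s))² over the set {π : π is a probability distribution on S and Σ_{s∈S} μ(s)·ln(π(s)/ν(s)) ≥ 0}. -/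
open Finset

lemma log_aux (x : ℝ) (h : -(1/2) ≤ x) : x - x ^ 2 ≤ Real.log (1 + x) := by
  have hp : 0 < 1 + x := by linarith
  rcases le_total 0 x with h0 | h0
  · have h1 := Real.one_sub_inv_le_log_of_pos hp
    have h2 : x - x ^ 2 ≤ 1 - (1 + x)⁻¹ := by
      have : 1 - (1 + x)⁻¹ - (x - x ^ 2) = x ^ 3 / (1 + x) := by
        field_simp
        ring
      have : 0 ≤ x ^ 3 / (1 + x) := by positivity
      linarith
    linarith
  · rw [Real.le_log_iff_exp_le hp]
    obtain ⟨t, rfl⟩ : ∃ t, x = -t := ⟨-x, by ring⟩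
    have ht0 : 0 ≤ t := by linarith
    have hu : 0 ≤ t + t ^ 2 := by positivity
    have hq := Real.quadratic_le_exp_of_nonneg hu
    have e : -t - (-t) ^ 2 = -(t + t ^ 2) := by ring
    rw [e, Real.exp_neg]
    rw [inv_le_iff_one_le_mul₀ (Real.exp_pos _)]
    have h1 : (1 + -t) * (1 + (t + t ^ 2) + (t + t ^ 2) ^ 2 / 2) ≤
        (1 + -t) * Real.exp (t + t ^ 2) := mul_le_mul_of_nonneg_left hq hp.le
    have h2 : 0 ≤ 1 - t - t ^ 2 - t ^ 3 := by
      have ht : t ≤ 1 / 2 := by linarith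
      have a : t ^ 2 ≤ (1 / 2) ^ 2 := by gcongr
      have b : t ^ 3 ≤ (1 / 2) ^ 3 := by gcongr
      linarith
    have h3 : (1 + -t) * (1 + (t + t ^ 2) + (t + t ^ 2) ^ 2 / 2) =
      1 + t ^ 2 / 2 * (1 - t - t ^ 2 - t ^ 3) := by ring
    have h4 : 0 ≤ t ^ 2 / 2 * (1 - t - t ^ 2 - t ^ 3) := by positivity
    linarith

/-- the equilibrium narrative `π*(s) = ν(s) + (s−m)/(2c)` is a full-support
probability distribution, lies strictly inside the KL constraint, and is the unique
maximizer of the sender's objective over the constrained set. -/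
theorem stmt16 (S : Finset ℝ) (hScard : 2 ≤ S.card)
    (hS : ∀ s ∈ S, s ∈ Set.Ioo (0 : ℝ) 1)
    (μ ν : ℝ → ℝ)
    (hμpos : ∀ s ∈ S, 0 < μ s) (hμsum : ∑ s ∈ S, μ s = 1)
    (hνpos : ∀ s ∈ S, 0 < ν s) (hνsum : ∑ s ∈ S, ν s = 1)
    (c : ℝ) (hc : 0 < c)
    (m : ℝ) (hm : m = (∑ s ∈ S, s) / S.card)
    (hpos : 0 < ∑ s ∈ S, μ s * ((s - m) / ν s))
    (hc1 : (∑ s ∈ S, μ s * ((s - m) / ν s) ^ 2) /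
      (2 * ∑ s ∈ S, μ s * ((s - m) / ν s)) < c)
    (hc2 : ∀ s ∈ S, |s - m| / ν s < c)
    (πstar : ℝ → ℝ) (hπstar : ∀ s, πstar s = ν s + (s - m) / (2 * c)) :
    ((∀ s ∈ S, 0 < πstar s) ∧ ∑ s ∈ S, πstar s = 1) ∧
    (0 < ∑ s ∈ S, μ s * Real.log (πstar s / ν s)) ∧
    (∀ π : ℝ → ℝ, (∀ s ∈ S, 0 ≤ π s) → (∑ s ∈ S, π s = 1) →
      0 ≤ (∑ s ∈ S, μ s * Real.log (π s / ν s)) →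
      (∃ s ∈ S, π s ≠ πstar s) →
      (∑ s ∈ S, s * π s) - c * ∑ s ∈ S, (π s - ν s) ^ 2 <
        (∑ s ∈ S, s * πstar s) - c * ∑ s ∈ S, (πstar s - ν s) ^ 2) := by
  have hx : ∀ s ∈ S, -(1/2) < (s - m) / ν s / (2 * c) := by
    intro s hs
    have h1 := hc2 s hs
    have hn := hνpos s hs
    rw [div_lt_iff₀ hn] at h1
    have h2 := neg_abs_le (s - m)
    rw [div_div, lt_div_iff₀ (by positivity)]
    linarith
  have hr : ∀ s ∈ S, πstar s / ν s = 1 + (s - m) / ν s / (2 * c) := by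
    intro s hs
    have hn := hνpos s hs
    rw [hπstar]
    field_simp
  have hsm : ∑ s ∈ S, (s - m) = 0 := by
    have : (S.card : ℝ) ≠ 0 := by
      have : S.card ≠ 0 := by omega
      exact_mod_cast this
    rw [Finset.sum_sub_distrib, Finset.sum_const, nsmul_eq_mul, hm]
    field_simp
    ring
  have hsum : ∑ s ∈ S, πstar s = 1 := by
    simp only [hπstar]
    rw [Finset.sum_add_distrib, ← Finset.sum_div, hsm, hνsum]
    simp
  refine ⟨⟨?_, hsum⟩, ?_, ?_⟩
  · intro s hs
    have h1 := hr s hs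
    have h2 := hx s hs
    have h3 : 0 < πstar s / ν s := by rw [h1]; linarith
    have hn := hνpos s hs
    exact (div_pos_iff_of_pos_right hn).1 h3
  · have h1 : ∑ s ∈ S, μ s * ((s - m) / ν s / (2 * c) - ((s - m) / ν s / (2 * c)) ^ 2) ≤
        ∑ s ∈ S, μ s * Real.log (πstar s / ν s) := by
      refine Finset.sum_le_sum fun s hs => ?_
      rw [hr s hs]
      exact mul_le_mul_of_nonneg_left (log_aux _ (hx s hs).le) (hμpos s hs).le
    refine lt_of_lt_of_le ?_ h1
    have h2 : ∑ s ∈ S, μ s * ((s - m) / ν s / (2 * c) - ((s - m) / ν s / (2 * c)) ^ 2) =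
        (2 * c * (∑ s ∈ S, μ s * ((s - m) / ν s)) - ∑ s ∈ S, μ s * ((s - m) / ν s) ^ 2)
          / (2 * c) ^ 2 := by
      rw [Finset.mul_sum, ← Finset.sum_sub_distrib, Finset.sum_div]
      refine Finset.sum_congr rfl fun s hs => ?_
      generalize (s - m) / ν s = y
      field_simp
    rw [h2]
    rw [div_lt_iff₀ (by positivity)] at hc1
    apply div_pos _ (by positivity)
    linarith
  · intro π _ hπ1 _ ⟨s, hs, hne⟩
    have h1 : ((∑ s ∈ S, s * πstar s) - c * ∑ s ∈ S, (πstar s - ν s) ^ 2) -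
        ((∑ s ∈ S, s * π s) - c * ∑ s ∈ S, (π s - ν s) ^ 2) =
        c * ∑ s ∈ S, (π s - πstar s) ^ 2 - m * (∑ s ∈ S, π s - ∑ s ∈ S, πstar s) := by
      simp only [Finset.mul_sum, ← Finset.sum_sub_distrib]
      refine Finset.sum_congr rfl fun s hs => ?_
      rw [hπstar]
      field_simp
      ring
    have h2 : 0 < ∑ s ∈ S, (π s - πstar s) ^ 2 :=
      Finset.sum_pos' (fun i _ => sq_nonneg _)
        ⟨s, hs, by have := sub_ne_zero.2 hne; positivity⟩
    have h3 := mul_pos hc h2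
    rw [hπ1, hsum] at h1
    linarith
end
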